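/- Fix an integer p ≥ 2 and real numbers α, β with 0 ≤ α ≤ β ≤ p−1. Then the Hausdorff dimension of the Banach set B(α,β) = {x ∈ [0,1] : M̲(x) = α and M̄(x) = β} equals sup_{α ≤ t ≤ β} h(t), where h is the p-adic entropy function. -/

import Mathlib

open Filter MeasureTheory Set
open scoped ENNReal

noncomputable section

/-- Number of words of length `n` over the alphabet `{0, …, p-1}` whose digit sum lies
strictly between `n(α-δ)` and `n(α+δ)`; this is `h(α,n,δ)`. -/
def hcount (p n : ℕ) (α δ : ℝ) : ℕ :=
  Nat.card {w : Fin n → Fin p //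
    (n : ℝ) * (α - δ) < ∑ i, ((w i : ℕ) : ℝ) ∧ (∑ i, ((w i : ℕ) : ℝ)) < n * (α + δ)}

/-- The `p`-adic entropy function
`h(α) = lim_{δ→0} limsup_{n→∞} log h(α,n,δ) / (n log p)`.
Since the inner quantity is nondecreasing in `δ`, the limit as `δ → 0⁺` equals the
infimum over `δ > 0`. -/
def entropy (p : ℕ) (α : ℝ) : ℝ :=
  ⨅ δ : {δ : ℝ // 0 < δ},
    limsup (fun n : ℕ => Real.log (hcount p n α δ) / (n * Real.log p)) atTop

/-- Number of words of length `n` over `{0, …, p-1}` with digit sum `< n(α+δ)`;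
this is `h̄(α,n,δ)`. -/
def hbarCount (p n : ℕ) (α δ : ℝ) : ℕ :=
  Nat.card {w : Fin n → Fin p // (∑ i, ((w i : ℕ) : ℝ)) < n * (α + δ)}

/-- The `p`-adic upper entropy function
`h̄(α) = lim_{δ→0} limsup_{n→∞} log h̄(α,n,δ) / (n log p)`, the limit in `δ`
being the infimum over `δ > 0` by monotonicity in `δ`. -/
def upperEntropy (p : ℕ) (α : ℝ) : ℝ :=
  ⨅ δ : {δ : ℝ // 0 < δ},
    limsup (fun n : ℕ => Real.log (hbarCount p n α δ) / (n * Real.log p)) atTop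

/-- Number of words of length `n` over `{0, …, p-1}` with digit sum `> n(α-δ)`;
this is `h̲(α,n,δ)`. -/
def hlowCount (p n : ℕ) (α δ : ℝ) : ℕ :=
  Nat.card {w : Fin n → Fin p // (n : ℝ) * (α - δ) < ∑ i, ((w i : ℕ) : ℝ)}

/-- The `p`-adic lower entropy function
`h̲(α) = lim_{δ→0} liminf_{n→∞} log h̲(α,n,δ) / (n log p)`, the limit in `δ`
being the infimum over `δ > 0` by monotonicity in `δ`. -/
def lowerEntropy (p : ℕ) (α : ℝ) : ℝ :=
  ⨅ δ : {δ : ℝ // 0 < δ},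
    liminf (fun n : ℕ => Real.log (hlowCount p n α δ) / (n * Real.log p)) atTop

/-- The `(n+1)`-th digit `x_{n+1} ∈ {0,…,p-1}` of the non-terminating `p`-adic expansion
`x = 0.x₁x₂x₃…` of `x ∈ [0,1]` (the expansion not ending in all zeros). -/
def padicDigit (p : ℕ) (x : ℝ) (n : ℕ) : ℤ :=
  (⌈x * p ^ (n + 1)⌉ - 1) - p * (⌈x * p ^ n⌉ - 1)

/-- `S_n(T^m x) = x_{m+1} + ⋯ + x_{m+n}`, the digit sum of length `n` after shifting
`m` times. In particular `msum p x 0 n = S_n(x)`. -/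
def msum (p : ℕ) (x : ℝ) (m n : ℕ) : ℤ :=
  ∑ i ∈ Finset.range n, padicDigit p x (m + i)

/-- The `n`-th lower moving digit mean `M̲ₙ(x) = liminf_{m→∞} S_n(T^m x)/n`. -/
def lowerMn (p : ℕ) (x : ℝ) (n : ℕ) : ℝ :=
  liminf (fun m : ℕ => (msum p x m n : ℝ) / n) atTop

/-- The `n`-th upper moving digit mean `M̄ₙ(x) = limsup_{m→∞} S_n(T^m x)/n`. -/
def upperMn (p : ℕ) (x : ℝ) (n : ℕ) : ℝ :=
  limsup (fun m : ℕ => (msum p x m n : ℝ) / n) atTop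

/-- The lower moving digit mean `M̲(x) = lim_{n→∞} M̲ₙ(x)`; the limit exists by
subadditivity, hence equals the `liminf`. -/
def lowerM (p : ℕ) (x : ℝ) : ℝ := liminf (fun n : ℕ => lowerMn p x n) atTop

/-- The upper moving digit mean `M̄(x) = lim_{n→∞} M̄ₙ(x)`; the limit exists by
subadditivity, hence equals the `limsup`. -/
def upperM (p : ℕ) (x : ℝ) : ℝ := limsup (fun n : ℕ => upperMn p x n) atTop

/-- The lower digit mean `A̲(x) = liminf_{n→∞} S_n(x)/n`. -/
def lowerA (p : ℕ) (x : ℝ) : ℝ := liminf (fun n : ℕ => (msum p x 0 n : ℝ) / n) atTop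

/-- The upper digit mean `Ā(x) = limsup_{n→∞} S_n(x)/n`. -/
def upperA (p : ℕ) (x : ℝ) : ℝ := limsup (fun n : ℕ => (msum p x 0 n : ℝ) / n) atTop

/-- The Banach set `B(α,β) = {x ∈ [0,1] : M̲(x) = α, M̄(x) = β}`. -/
def BanachSet (p : ℕ) (α β : ℝ) : Set ℝ :=
  {x | x ∈ Icc (0 : ℝ) 1 ∧ lowerM p x = α ∧ upperM p x = β}

lemma padicDigit_nonneg (p : ℕ) (hp : 0 < p) (x : ℝ) (n : ℕ) : 0 ≤ padicDigit p x n := by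
  have h1 : ((⌈x * p ^ n⌉ : ℝ)) < x * p ^ n + 1 := Int.ceil_lt_add_one _
  have hp' : (0 : ℝ) < p := by exact_mod_cast hp
  have h2 : ((p * (⌈x * p ^ n⌉ - 1) : ℤ) : ℝ) < x * p ^ (n + 1) := by
    push_cast
    calc (p : ℝ) * (⌈x * p ^ n⌉ - 1) < p * (x * p ^ n) := by gcongr; linarith
      _ = _ := by ring
  have h3 := Int.lt_ceil.2 h2
  unfold padicDigit
  linarith

lemma padicDigit_lt (p : ℕ) (x : ℝ) (n : ℕ) : padicDigit p x n < p := by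
  have h1 : x * p ^ n ≤ (⌈x * p ^ n⌉ : ℝ) := Int.le_ceil _
  have h2 : x * p ^ (n + 1) ≤ ((p * ⌈x * p ^ n⌉ : ℤ) : ℝ) := by
    push_cast
    calc x * (p : ℝ) ^ (n + 1) = p * (x * p ^ n) := by ring
      _ ≤ _ := by gcongr
  have h3 := Int.ceil_le.2 h2
  unfold padicDigit
  linarith

lemma padicDigit_toNat_lt (p : ℕ) (hp : 0 < p) (x : ℝ) (n : ℕ) :
    (padicDigit p x n).toNat < p := by
  have := padicDigit_lt p x n
  have := padicDigit_nonneg p hp x n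
  omega

lemma ceil_mul_pow_eq_of_padicDigit_eq {p : ℕ} {x y : ℝ} (hx : x ∈ Ioc (0 : ℝ) 1)
    (hy : y ∈ Ioc (0 : ℝ) 1) {K : ℕ} (h : ∀ i < K, padicDigit p x i = padicDigit p y i) :
    ⌈x * p ^ K⌉ = ⌈y * p ^ K⌉ := by
  induction K with
  | zero =>
    have hone : ∀ z ∈ Ioc (0 : ℝ) 1, ⌈z⌉ = 1 := fun z hz =>
      Int.ceil_eq_iff.2 ⟨by simpa using hz.1, by simpa using hz.2⟩
    simp [hone x hx, hone y hy]
  | succ K ih =>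
    have h1 := ih fun i hi => h i (by omega)
    have h2 := h K (by omega)
    unfold padicDigit at h2
    rw [h1] at h2
    linarith

lemma abs_sub_le_of_padicDigit_eq {p : ℕ} (hp : 0 < p) {x y : ℝ} (hx : x ∈ Ioc (0 : ℝ) 1)
    (hy : y ∈ Ioc (0 : ℝ) 1) {K : ℕ} (h : ∀ i < K, padicDigit p x i = padicDigit p y i) :
    |x - y| ≤ ((p : ℝ) ^ K)⁻¹ := by
  have h1 := ceil_mul_pow_eq_of_padicDigit_eq hx hy h
  have hpK : (0 : ℝ) < p ^ K := by positivity
  have hx1 := Int.le_ceil (x * (p : ℝ) ^ K)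
  have hx2 := Int.ceil_lt_add_one (x * (p : ℝ) ^ K)
  have hy1 := Int.le_ceil (y * (p : ℝ) ^ K)
  have hy2 := Int.ceil_lt_add_one (y * (p : ℝ) ^ K)
  rw [h1] at hx1 hx2
  rw [← one_div, le_div_iff₀ hpK, ← abs_of_pos hpK, ← abs_mul, abs_le]
  constructor <;> nlinarith

/-- Points of `(0, 1]` whose digits after position `m`, read in consecutive words of length `n`,
all belong to `W`. -/
def windowSet (p n m : ℕ) (W : Finset (Fin n → Fin p)) : Set ℝ :=
  {x | x ∈ Ioc (0 : ℝ) 1 ∧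
    ∀ j : ℕ, ∃ w ∈ W, ∀ l : Fin n, padicDigit p x (m + (j * n + l)) = ((w l : ℕ) : ℤ)}

lemma dimH_windowSet_le {p n m : ℕ} (hp : 2 ≤ p) (hn : 0 < n) (W : Finset (Fin n → Fin p))
    (d : NNReal) (hW : (W.card : ℝ) ≤ (p : ℝ) ^ ((n : ℝ) * d)) :
    dimH (windowSet p n m W) ≤ d := by
  have hp0 : (0 : ℝ) < p := by positivity
  apply dimH_le_of_hausdorffMeasure_ne_top
  let cell : ∀ k : ℕ, ((Fin m → Fin p) × (Fin k → W)) → Set ℝ := fun k i =>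
    {x | x ∈ Ioc (0 : ℝ) 1 ∧ (∀ l : Fin m, padicDigit p x l = ((i.1 l : ℕ) : ℤ)) ∧
      ∀ j : Fin k, ∀ l : Fin n, padicDigit p x (m + (j * n + l)) = (((i.2 j).1 l : ℕ) : ℤ)}
  let r : ℕ → ℝ := fun k => ((p : ℝ) ^ (m + k * n))⁻¹
  have hdiam : ∀ k i, Metric.ediam (cell k i) ≤ ENNReal.ofReal (r k) := by
    intro k i
    refine Metric.ediam_le fun x hx y hy => ?_
    rw [edist_dist, Real.dist_eq]
    refine ENNReal.ofReal_le_ofReal (abs_sub_le_of_padicDigit_eq (by omega) hx.1 hy.1 ?_)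
    intro q hq
    by_cases hqm : q < m
    · rw [hx.2.1 ⟨q, hqm⟩, hy.2.1 ⟨q, hqm⟩]
    · have hk : (q - m) / n < k := (Nat.div_lt_iff_lt_mul hn).2 (by omega)
      have hl : (q - m) % n < n := Nat.mod_lt _ hn
      have e : m + ((q - m) / n * n + (q - m) % n) = q := by
        rw [Nat.div_add_mod']; omega
      have h1 := hx.2.2 ⟨_, hk⟩ ⟨_, hl⟩
      have h2 := hy.2.2 ⟨_, hk⟩ ⟨_, hl⟩
      simp only [e] at h1 h2
      rw [h1, h2]
  have hr : Tendsto (fun k => ENNReal.ofReal (r k)) atTop (nhds 0) := by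
    rw [← ENNReal.ofReal_zero]
    refine ENNReal.tendsto_ofReal ?_
    have h1 : Tendsto (fun k : ℕ => m + k * n) atTop atTop :=
      tendsto_atTop_mono (fun k => (Nat.le_mul_of_pos_right k hn).trans (Nat.le_add_left _ _))
      tendsto_id
    exact ((tendsto_pow_atTop_atTop_of_one_lt (by exact_mod_cast hp : (1 : ℝ) < p)).comp
      h1).inv_tendsto_atTop
  have key := Measure.hausdorffMeasure_le_liminf_sum (d : ℝ) (windowSet p n m W) _ hr cell
    (Eventually.of_forall hdiam) (Eventually.of_forall fun k x hx => by
      choose w hwW hw using hx.2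
      refine mem_iUnion.2 ⟨⟨fun l => ⟨_, padicDigit_toNat_lt p (by omega) x l⟩,
        fun j => ⟨w j, hwW j⟩⟩, hx.1, fun l => ?_, fun j l => hw j l⟩
      exact (Int.toNat_of_nonneg (padicDigit_nonneg p (by omega) x l)).symm)
  have hsum : ∀ k, ∑ i, Metric.ediam (cell k i) ^ (d : ℝ) ≤ ENNReal.ofReal ((p : ℝ) ^ m) := by
    intro k
    have hrk : 0 < r k := by positivity
    calc ∑ i, Metric.ediam (cell k i) ^ (d : ℝ)
        ≤ ∑ _i : (Fin m → Fin p) × (Fin k → W), ENNReal.ofReal (r k ^ (d : ℝ)) := by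
          refine Finset.sum_le_sum fun i _ => ?_
          rw [← ENNReal.ofReal_rpow_of_pos hrk]
          exact ENNReal.rpow_le_rpow (hdiam k i) d.2
      _ = ENNReal.ofReal ((p : ℝ) ^ m * (W.card : ℝ) ^ k * r k ^ (d : ℝ)) := by
          rw [Finset.sum_const, nsmul_eq_mul, ENNReal.ofReal_mul (by positivity)]
          congr 1
          simp only [Finset.card_univ, Fintype.card_prod, Fintype.card_fun, Fintype.card_fin,
            Fintype.card_coe]
          rw [← ENNReal.ofReal_natCast]
          push_cast
          rfl
      _ ≤ ENNReal.ofReal ((p : ℝ) ^ m) := by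
          refine ENNReal.ofReal_le_ofReal ?_
          have e : r k ^ (d : ℝ) = ((p : ℝ) ^ ((m : ℝ) * d))⁻¹ * (((p : ℝ) ^ ((n : ℝ) * d)) ^ k)⁻¹ := by
            simp only [r]
            rw [← Real.rpow_natCast p, ← Real.rpow_natCast _ k, ← Real.rpow_mul hp0.le,
              ← Real.rpow_neg hp0.le, ← Real.rpow_neg hp0.le, ← Real.rpow_neg hp0.le,
              ← Real.rpow_mul hp0.le, ← Real.rpow_add hp0]
            congr 1
            push_cast
            ring
          have h1 : (W.card : ℝ) ^ k * (((p : ℝ) ^ ((n : ℝ) * d)) ^ k)⁻¹ ≤ 1 := by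
            rw [← div_eq_mul_inv, div_le_one (by positivity)]
            gcongr
          have h2 : ((p : ℝ) ^ ((m : ℝ) * d))⁻¹ ≤ 1 := by
            refine inv_le_one_of_one_le₀ (Real.one_le_rpow (by exact_mod_cast (by omega : 1 ≤ p)) ?_)
            positivity
          calc (p : ℝ) ^ m * (W.card : ℝ) ^ k * r k ^ (d : ℝ)
              = (p : ℝ) ^ m * (((p : ℝ) ^ ((m : ℝ) * d))⁻¹ *
                ((W.card : ℝ) ^ k * (((p : ℝ) ^ ((n : ℝ) * d)) ^ k)⁻¹)) := by rw [e]; ring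
            _ ≤ (p : ℝ) ^ m * (1 * 1) := by gcongr
            _ = _ := by ring
  refine ne_top_of_le_ne_top (b := ENNReal.ofReal ((p : ℝ) ^ m)) ENNReal.ofReal_ne_top
    (key.trans ?_)
  exact (liminf_le_liminf (Eventually.of_forall hsum)).trans (liminf_const _).le

lemma hcount_le_pow (p n : ℕ) (α δ : ℝ) : hcount p n α δ ≤ p ^ n := by
  refine (Finite.card_subtype_le _).trans ?_
  simp

/-- The exponential growth rate `log h(α,n,δ) / (n log p)`. -/
def hrate (p : ℕ) (α δ : ℝ) (n : ℕ) : ℝ := Real.log (hcount p n α δ) / (n * Real.log p)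

lemma hrate_nonneg (p : ℕ) (α δ : ℝ) (n : ℕ) : 0 ≤ hrate p α δ n :=
  div_nonneg (Real.log_natCast_nonneg _) (mul_nonneg n.cast_nonneg (Real.log_natCast_nonneg _))

lemma hrate_le_one (p : ℕ) (α δ : ℝ) (n : ℕ) : hrate p α δ n ≤ 1 := by
  refine div_le_one_of_le₀ ?_ (mul_nonneg n.cast_nonneg (Real.log_natCast_nonneg _))
  rcases Nat.eq_zero_or_pos (hcount p n α δ) with h | h
  · rw [h]
    simpa using mul_nonneg n.cast_nonneg (Real.log_natCast_nonneg p)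
  · rw [← Real.log_pow]
    exact Real.log_le_log (by exact_mod_cast h) (by exact_mod_cast hcount_le_pow p n α δ)

lemma hrate_isBoundedUnder_le (p : ℕ) (α δ : ℝ) :
    IsBoundedUnder (· ≤ ·) atTop (hrate p α δ) :=
  isBoundedUnder_of ⟨1, hrate_le_one p α δ⟩

lemma hrate_isBoundedUnder_ge (p : ℕ) (α δ : ℝ) :
    IsBoundedUnder (· ≥ ·) atTop (hrate p α δ) :=
  isBoundedUnder_of ⟨0, hrate_nonneg p α δ⟩

lemma limsup_hrate_nonneg (p : ℕ) (α δ : ℝ) : 0 ≤ limsup (hrate p α δ) atTop :=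
  le_limsup_of_frequently_le (Frequently.of_forall (hrate_nonneg p α δ))
    (hrate_isBoundedUnder_le p α δ)

lemma limsup_hrate_le_one (p : ℕ) (α δ : ℝ) : limsup (hrate p α δ) atTop ≤ 1 :=
  limsup_le_of_le (hrate_isBoundedUnder_ge p α δ).isCoboundedUnder_le
    (Eventually.of_forall (hrate_le_one p α δ))

lemma entropy_eq_iInf (p : ℕ) (α : ℝ) :
    entropy p α = ⨅ δ : {δ : ℝ // 0 < δ}, limsup (hrate p α δ) atTop := rfl

lemma entropy_le_limsup_hrate (p : ℕ) (α : ℝ) {δ : ℝ} (hδ : 0 < δ) :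
    entropy p α ≤ limsup (hrate p α δ) atTop := by
  rw [entropy_eq_iInf]
  refine ciInf_le (f := fun δ : {δ : ℝ // 0 < δ} => limsup (hrate p α δ) atTop) ⟨0, ?_⟩ ⟨δ, hδ⟩
  rintro _ ⟨δ, rfl⟩
  exact limsup_hrate_nonneg p α δ

lemma entropy_nonneg (p : ℕ) (α : ℝ) : 0 ≤ entropy p α :=
  Real.iInf_nonneg fun δ => limsup_hrate_nonneg p α δ

lemma entropy_le_one (p : ℕ) (α : ℝ) : entropy p α ≤ 1 :=
  (entropy_le_limsup_hrate p α one_pos).trans (limsup_hrate_le_one p α 1)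

lemma le_iSup_entropy (p : ℕ) {s : Set ℝ} {t : ℝ} (ht : t ∈ s) :
    entropy p t ≤ ⨆ t ∈ s, entropy p t := by
  have hb : BddAbove (range fun t => ⨆ _ : t ∈ s, entropy p t) := by
    refine ⟨1, ?_⟩
    rintro _ ⟨t, rfl⟩
    exact Real.iSup_le (fun _ => entropy_le_one p t) zero_le_one
  refine le_trans ?_ (le_ciSup hb t)
  simp [ht]

lemma iSup_entropy_nonneg (p : ℕ) (s : Set ℝ) : 0 ≤ ⨆ t ∈ s, entropy p t :=
  Real.iSup_nonneg fun t => Real.iSup_nonneg fun _ => entropy_nonneg p t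

lemma exists_limsup_hrate_lt {p : ℕ} {α c : ℝ} (h : entropy p α < c) :
    ∃ δ > 0, limsup (hrate p α δ) atTop < c := by
  rw [entropy_eq_iInf] at h
  have : Nonempty {δ : ℝ // 0 < δ} := ⟨⟨1, one_pos⟩⟩
  obtain ⟨δ, hδ⟩ := exists_lt_of_ciInf_lt h
  exact ⟨δ, δ.2, hδ⟩

lemma log_natCast_pos {p : ℕ} (hp : 2 ≤ p) : 0 < Real.log p :=
  Real.log_pos (by exact_mod_cast hp)

lemma eventually_hcount_le {p : ℕ} (hp : 2 ≤ p) {α δ c : ℝ}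
    (h : limsup (hrate p α δ) atTop < c) :
    ∀ᶠ n : ℕ in atTop, (hcount p n α δ : ℝ) ≤ (p : ℝ) ^ (n * c) := by
  filter_upwards [eventually_lt_of_limsup_lt h (hrate_isBoundedUnder_le p α δ),
    eventually_gt_atTop 0] with n hn hn0
  have hp0 : (0 : ℝ) < p := by positivity
  have hlog := log_natCast_pos hp
  have hn0' : (0 : ℝ) < n := by exact_mod_cast hn0
  rcases Nat.eq_zero_or_pos (hcount p n α δ) with h0 | h0
  · rw [h0]; push_cast; positivity
  · rw [Real.le_rpow_iff_log_le (by exact_mod_cast h0) hp0]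
    rw [hrate, div_lt_iff₀ (by positivity)] at hn
    linarith

lemma exists_eventually_card_le {p : ℕ} (hp : 2 ≤ p) (α β : ℝ) (hαβ : α ≤ β) {ε : ℝ}
    (hε : 0 < ε) :
    ∃ δ > 0, ∀ᶠ n : ℕ in atTop,
      ((Finset.univ.filter fun w : Fin n → Fin p => (n : ℝ) * (α - δ) < ∑ i, ((w i : ℕ) : ℝ) ∧
        (∑ i, ((w i : ℕ) : ℝ)) < n * (β + δ)).card : ℝ) ≤
        (p : ℝ) ^ ((n : ℝ) * ((⨆ t ∈ Icc α β, entropy p t) + 2 * ε)) := by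
  set S := ⨆ t ∈ Icc α β, entropy p t with hS
  have hp0 : (0 : ℝ) < p := by positivity
  have hp1 : (1 : ℝ) < p := by exact_mod_cast hp
  have hex : ∀ t : ℝ, ∃ δ > 0, t ∈ Icc α β → limsup (hrate p t δ) atTop < S + ε := by
    intro t
    by_cases ht : t ∈ Icc α β
    · obtain ⟨δ, h0, h1⟩ := exists_limsup_hrate_lt
        ((le_iSup_entropy p ht).trans_lt (lt_add_of_pos_right S hε))
      exact ⟨δ, h0, fun _ => h1⟩
    · exact ⟨1, one_pos, fun h => absurd h ht⟩
  choose η hη0 hη using hex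
  obtain ⟨F, hFs, hF⟩ := (isCompact_Icc (a := α) (b := β)).elim_nhds_subcover
    (fun t => Metric.ball t (η t)) (fun t _ => Metric.ball_mem_nhds t (hη0 t))
  obtain ⟨δ, hδ, hsub⟩ := (isCompact_Icc (a := α) (b := β)).exists_thickening_subset_open
    (isOpen_biUnion fun t _ => Metric.isOpen_ball) hF
  refine ⟨δ, hδ, ?_⟩
  have h1 : ∀ᶠ n : ℕ in atTop, ∀ t ∈ F, (hcount p n t (η t) : ℝ) ≤ (p : ℝ) ^ (n * (S + ε)) :=
    (Filter.eventually_all_finset F).2 fun t ht => eventually_hcount_le hp (hη t (hFs t ht))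
  have h2 : ∀ᶠ n : ℕ in atTop, (F.card : ℝ) ≤ ((p : ℝ) ^ ε) ^ n :=
    (tendsto_pow_atTop_atTop_of_one_lt (Real.one_lt_rpow hp1 hε)).eventually_ge_atTop _
  filter_upwards [h1, h2, eventually_gt_atTop 0] with n h1 h2 hn0
  have hn0' : (0 : ℝ) < n := by exact_mod_cast hn0
  have hcard : (Finset.univ.filter fun w : Fin n → Fin p =>
      (n : ℝ) * (α - δ) < ∑ i, ((w i : ℕ) : ℝ) ∧ (∑ i, ((w i : ℕ) : ℝ)) < n * (β + δ)).card ≤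
      ∑ t ∈ F, hcount p n t (η t) := by
    classical
    have hsubset : (Finset.univ.filter fun w : Fin n → Fin p =>
        (n : ℝ) * (α - δ) < ∑ i, ((w i : ℕ) : ℝ) ∧ (∑ i, ((w i : ℕ) : ℝ)) < n * (β + δ)) ⊆
        F.biUnion fun t => Finset.univ.filter fun w : Fin n → Fin p =>
          (n : ℝ) * (t - η t) < ∑ i, ((w i : ℕ) : ℝ) ∧ (∑ i, ((w i : ℕ) : ℝ)) < n * (t + η t) := by
      intro w hw
      simp only [Finset.mem_filter, Finset.mem_univ, true_and, Finset.mem_biUnion] at hw ⊢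
      set s : ℝ := (∑ i, ((w i : ℕ) : ℝ)) / n with hs
      have hsn : ∑ i, ((w i : ℕ) : ℝ) = n * s := by rw [hs]; field_simp
      rw [hsn] at hw ⊢
      have hl : α - δ < s := lt_of_mul_lt_mul_left hw.1 hn0'.le
      have hr : s < β + δ := lt_of_mul_lt_mul_left hw.2 hn0'.le
      have hmem : s ∈ Metric.thickening δ (Icc α β) := by
        rw [Metric.mem_thickening_iff]
        refine ⟨max α (min β s), ⟨le_max_left _ _, max_le hαβ (min_le_left _ _)⟩, ?_⟩
        rw [Real.dist_eq, abs_lt]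
        constructor <;> rcases le_total β s with h | h <;> rcases le_total α s with h' | h' <;>
          simp only [min_eq_left, min_eq_right, max_eq_left, max_eq_right, h, h', hαβ] <;> linarith
      obtain ⟨t, ht, hst⟩ := mem_iUnion₂.1 (hsub hmem)
      rw [Metric.mem_ball, Real.dist_eq, abs_lt] at hst
      exact ⟨t, ht, by gcongr; linarith, by gcongr; linarith⟩
    refine (Finset.card_le_card hsubset).trans (Finset.card_biUnion_le.trans
      (Finset.sum_le_sum fun t _ => ?_))
    rw [hcount, Nat.card_eq_fintype_card, Fintype.card_subtype]
  calc _ ≤ ((∑ t ∈ F, hcount p n t (η t) : ℕ) : ℝ) := by exact_mod_cast hcard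
    _ = ∑ t ∈ F, (hcount p n t (η t) : ℝ) := by push_cast; rfl
    _ ≤ ∑ t ∈ F, (p : ℝ) ^ (n * (S + ε)) := Finset.sum_le_sum h1
    _ = F.card * (p : ℝ) ^ (n * (S + ε)) := by rw [Finset.sum_const, nsmul_eq_mul]
    _ ≤ ((p : ℝ) ^ ε) ^ n * (p : ℝ) ^ (n * (S + ε)) := by gcongr
    _ = (p : ℝ) ^ ((n : ℝ) * (S + 2 * ε)) := by
      rw [← Real.rpow_natCast _ n, ← Real.rpow_mul hp0.le, ← Real.rpow_add hp0]
      congr 1; ring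

lemma msum_nonneg {p : ℕ} (hp : 0 < p) (x : ℝ) (m n : ℕ) : 0 ≤ msum p x m n :=
  Finset.sum_nonneg fun _ _ => padicDigit_nonneg p hp x _

lemma msum_le {p : ℕ} (x : ℝ) (m n : ℕ) : msum p x m n ≤ n * p := by
  refine (Finset.sum_le_card_nsmul _ _ (p : ℤ) fun i _ => (padicDigit_lt p x _).le).trans ?_
  simp

lemma msum_div_mem {p : ℕ} (hp : 0 < p) (x : ℝ) (m n : ℕ) :
    (msum p x m n : ℝ) / n ∈ Icc (0 : ℝ) p := by
  have h0 : (0 : ℝ) ≤ msum p x m n := by exact_mod_cast msum_nonneg hp x m n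
  have h1 : (msum p x m n : ℝ) ≤ p * n := by
    rw [mul_comm]; exact_mod_cast msum_le (p := p) x m n
  exact ⟨by positivity, div_le_of_le_mul₀ (by positivity) (by positivity) h1⟩

lemma lowerMn_mem {p : ℕ} (hp : 0 < p) (x : ℝ) (n : ℕ) : lowerMn p x n ∈ Icc (0 : ℝ) p := by
  have hb := msum_div_mem hp x
  have h1 : IsBoundedUnder (· ≥ ·) atTop (fun m => (msum p x m n : ℝ) / n) :=
    isBoundedUnder_of ⟨0, fun m => (hb m n).1⟩
  have h2 : IsBoundedUnder (· ≤ ·) atTop (fun m => (msum p x m n : ℝ) / n) :=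
    isBoundedUnder_of ⟨p, fun m => (hb m n).2⟩
  exact ⟨le_liminf_of_le h2.isCoboundedUnder_ge (Eventually.of_forall fun m => (hb m n).1),
    liminf_le_of_frequently_le (Frequently.of_forall fun m => (hb m n).2) h1⟩

lemma upperMn_mem {p : ℕ} (hp : 0 < p) (x : ℝ) (n : ℕ) : upperMn p x n ∈ Icc (0 : ℝ) p := by
  have hb := msum_div_mem hp x
  have h1 : IsBoundedUnder (· ≥ ·) atTop (fun m => (msum p x m n : ℝ) / n) :=
    isBoundedUnder_of ⟨0, fun m => (hb m n).1⟩
  have h2 : IsBoundedUnder (· ≤ ·) atTop (fun m => (msum p x m n : ℝ) / n) :=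
    isBoundedUnder_of ⟨p, fun m => (hb m n).2⟩
  exact ⟨le_limsup_of_frequently_le (Frequently.of_forall fun m => (hb m n).1) h2,
    limsup_le_of_le h1.isCoboundedUnder_le (Eventually.of_forall fun m => (hb m n).2)⟩

lemma eventually_msum_bounds {p : ℕ} (hp : 0 < p) {x α β δ : ℝ} (hl : lowerM p x = α)
    (hu : upperM p x = β) (hδ : 0 < δ) :
    ∀ᶠ n : ℕ in atTop, ∀ᶠ m : ℕ in atTop,
      (n : ℝ) * (α - δ) < msum p x m n ∧ (msum p x m n : ℝ) < n * (β + δ) := by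
  have h1 : ∀ᶠ n : ℕ in atTop, α - δ < lowerMn p x n :=
    eventually_lt_of_lt_liminf (by change _ < lowerM p x; linarith)
      (isBoundedUnder_of ⟨0, fun n => (lowerMn_mem hp x n).1⟩)
  have h2 : ∀ᶠ n : ℕ in atTop, upperMn p x n < β + δ :=
    eventually_lt_of_limsup_lt (by change upperM p x < _; linarith)
      (isBoundedUnder_of ⟨p, fun n => (upperMn_mem hp x n).2⟩)
  filter_upwards [h1, h2, eventually_gt_atTop 0] with n h1 h2 hn
  have hn' : (0 : ℝ) < n := by exact_mod_cast hn
  have hb := msum_div_mem hp x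
  have h3 := eventually_lt_of_lt_liminf h1 (isBoundedUnder_of ⟨0, fun m => (hb m n).1⟩)
  have h4 := eventually_lt_of_limsup_lt h2 (isBoundedUnder_of ⟨p, fun m => (hb m n).2⟩)
  filter_upwards [h3, h4] with m h3 h4
  rw [lt_div_iff₀ hn'] at h3
  rw [div_lt_iff₀ hn'] at h4
  constructor <;> linarith

theorem dimH_BanachSet_le {p : ℕ} (hp : 2 ≤ p) {α β : ℝ} (hαβ : α ≤ β) :
    dimH (BanachSet p α β) ≤ ENNReal.ofReal (⨆ t ∈ Icc α β, entropy p t) := by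
  set S := ⨆ t ∈ Icc α β, entropy p t with hS
  have hS0 : 0 ≤ S := iSup_entropy_nonneg p _
  refine ENNReal.le_of_forall_pos_le_add fun ε hε _ => ?_
  obtain ⟨δ, hδ, hev⟩ := exists_eventually_card_le hp α β hαβ
    (show (0 : ℝ) < ε / 2 by positivity)
  obtain ⟨n₁, hn₁⟩ := eventually_atTop.1 (hev.and (eventually_gt_atTop 0))
  let W : ∀ n : ℕ, Finset (Fin n → Fin p) := fun n => Finset.univ.filter fun w =>
    (n : ℝ) * (α - δ) < ∑ i, ((w i : ℕ) : ℝ) ∧ (∑ i, ((w i : ℕ) : ℝ)) < n * (β + δ)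
  have hcover : BanachSet p α β ⊆
      {0} ∪ ⋃ q : ℕ × ℕ, windowSet p (n₁ + q.1) q.2 (W (n₁ + q.1)) := by
    rintro x ⟨hx, hl, hu⟩
    rcases hx.1.eq_or_lt with h0 | h0
    · exact Or.inl h0.symm
    · right
      obtain ⟨n, hn, hn1⟩ :=
        ((eventually_msum_bounds (by omega) hl hu hδ).and (eventually_ge_atTop n₁)).exists
      obtain ⟨m, hm⟩ := eventually_atTop.1 hn
      obtain ⟨a, rfl⟩ := Nat.exists_eq_add_of_le hn1
      refine mem_iUnion.2 ⟨(a, m), ⟨h0, hx.2⟩, fun j => ?_⟩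
      have hd := fun l => Int.toNat_of_nonneg (padicDigit_nonneg p (by omega) x l)
      refine ⟨fun l => ⟨_, padicDigit_toNat_lt p (by omega) x (m + (j * (n₁ + a) + l))⟩, ?_,
        fun l => (hd _).symm⟩
      have := hm (m + j * (n₁ + a)) (by omega)
      have e : ∑ l : Fin (n₁ + a), (((padicDigit p x (m + (j * (n₁ + a) + l))).toNat : ℕ) : ℝ) =
          msum p x (m + j * (n₁ + a)) (n₁ + a) := by
        rw [msum, ← Fin.sum_univ_eq_sum_range]
        push_cast
        refine Finset.sum_congr rfl fun l _ => ?_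
        rw [add_assoc]
        exact_mod_cast hd _
      simp only [W, Finset.mem_filter, Finset.mem_univ, true_and]
      rw [e]
      exact this
  refine (dimH_mono hcover).trans ?_
  rw [dimH_union, dimH_singleton, dimH_iUnion, ENNReal.bot_eq_zero.symm, max_eq_right bot_le]
  refine iSup_le fun q => ?_
  obtain ⟨h1, h2⟩ := hn₁ (n₁ + q.1) (by omega)
  have h3 := dimH_windowSet_le (m := q.2) hp h2 (W (n₁ + q.1)) (S.toNNReal + ε) (by
    rw [NNReal.coe_add, Real.coe_toNNReal S hS0]
    convert h1 using 3
    ring)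
  refine h3.trans ?_
  rw [ENNReal.coe_add]
  rfl

/-- The integer whose base `p` digits are the first `K` terms of `d`. -/
def prefixNat {p : ℕ} (d : ℕ → Fin p) : ℕ → ℕ
  | 0 => 0
  | K + 1 => p * prefixNat d K + d K

lemma ofDigits_mul_pow {p : ℕ} (d : ℕ → Fin p) (K : ℕ) :
    Real.ofDigits d * (p : ℝ) ^ K = prefixNat d K + Real.ofDigits fun i => d (i + K) := by
  induction K with
  | zero => simp [prefixNat]
  | succ K ih =>
    have hp : (p : ℝ) ≠ 0 := by
      have := Fin.pos (d 0)
      positivity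
    have h := Real.ofDigits_eq_sum_add_ofDigits (fun i => d (i + K)) 1
    simp only [Finset.sum_range_one, Real.ofDigitsTerm, zero_add, pow_one] at h
    rw [pow_succ, ← mul_assoc, ih, h, prefixNat]
    have e : (fun i => d (i + 1 + K)) = fun i => d (i + (K + 1)) := by
      funext i; congr 1; ring
    rw [e]
    push_cast
    field_simp
    ring

lemma ofDigits_pos {p : ℕ} {d : ℕ → Fin p} {i : ℕ} (hi : (d i : ℕ) ≠ 0) :
    0 < Real.ofDigits d := by
  have hp := Fin.pos (d 0)
  refine Real.summable_ofDigitsTerm.tsum_pos (fun _ => Real.ofDigitsTerm_nonneg) i ?_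
  have : (0 : ℝ) < (d i : ℕ) := by exact_mod_cast Nat.pos_of_ne_zero hi
  rw [Real.ofDigitsTerm]
  positivity

lemma padicDigit_ofDigits {p : ℕ} {d : ℕ → Fin p} (hd : ∀ K, ∃ i ≥ K, (d i : ℕ) ≠ 0) (n : ℕ) :
    padicDigit p (Real.ofDigits d) n = ((d n : ℕ) : ℤ) := by
  have hc : ∀ K, ⌈Real.ofDigits d * (p : ℝ) ^ K⌉ = (prefixNat d K : ℤ) + 1 := by
    intro K
    obtain ⟨i, hi, hdi⟩ := hd K
    have h1 : 0 < Real.ofDigits fun i => d (i + K) :=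
      ofDigits_pos (i := i - K) (by rwa [Nat.sub_add_cancel hi])
    have h2 := Real.ofDigits_le_one fun i => d (i + K)
    rw [ofDigits_mul_pow, Int.ceil_eq_iff]
    push_cast
    constructor <;> linarith
  rw [padicDigit, hc, hc, prefixNat]
  push_cast
  ring

lemma prefixNat_inj {p : ℕ} {d d' : ℕ → Fin p} {K : ℕ} (h : prefixNat d K = prefixNat d' K) :
    ∀ i < K, d i = d' i := by
  induction K with
  | zero => intro i hi; omega
  | succ K ih =>
    simp only [prefixNat] at h
    have hp := Fin.pos (d 0)
    have h1 : prefixNat d K = prefixNat d' K := by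
      have := congrArg (· / p) h
      simpa [Nat.mul_add_div hp, Nat.div_eq_of_lt] using this
    intro i hi
    rcases Nat.lt_succ_iff_lt_or_eq.1 hi with hi | rfl
    · exact ih h1 i hi
    · rw [h1] at h
      exact Fin.ext (by omega)

/-- Two digit sequences that differ before position `q` but agree at `q` represent points
at distance at least `p ^ (-(q + 1))`. -/
lemma le_abs_ofDigits_sub {p : ℕ} (hp : 2 ≤ p) {d d' : ℕ → Fin p} {i q : ℕ} (hiq : i < q)
    (hi : d i ≠ d' i) (hq : d q = d' q) :
    ((p : ℝ) ^ (q + 1))⁻¹ ≤ |Real.ofDigits d - Real.ofDigits d'| := by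
  have hpos : (0 : ℝ) < (p : ℝ) ^ (q + 1) := by positivity
  have hne : prefixNat d q ≠ prefixNat d' q := fun h => hi (prefixNat_inj h i hiq)
  rw [← one_div, div_le_iff₀ hpos, ← abs_of_pos hpos, ← abs_mul, sub_mul,
    ofDigits_mul_pow, ofDigits_mul_pow]
  simp only [prefixNat, hq]
  push_cast
  have a1 := Real.ofDigits_le_one fun i => d (i + (q + 1))
  have a2 := Real.ofDigits_nonneg fun i => d (i + (q + 1))
  have b1 := Real.ofDigits_le_one fun i => d' (i + (q + 1))
  have b2 := Real.ofDigits_nonneg fun i => d' (i + (q + 1))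
  have hp' : (2 : ℝ) ≤ p := by exact_mod_cast hp
  rcases lt_or_gt_of_ne hne with h | h
  · have h' : (prefixNat d q : ℝ) + 1 ≤ prefixNat d' q := by exact_mod_cast h
    rw [abs_sub_comm, le_abs]
    left
    nlinarith
  · have h' : (prefixNat d' q : ℝ) + 1 ≤ prefixNat d q := by exact_mod_cast h
    rw [le_abs]
    left
    nlinarith

lemma tendsto_add_const_div (a C : ℝ) : Tendsto (fun n : ℕ => a + C / n) atTop (nhds a) := by
  simpa using tendsto_const_nhds.add (tendsto_const_div_atTop_nhds_zero_nat C)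

lemma lowerM_eq_of_bounds {p : ℕ} (hp : 0 < p) {x α C : ℝ}
    (h1 : ∀ m n : ℕ, n * α - C ≤ msum p x m n)
    (h2 : ∀ n : ℕ, ∃ᶠ m in atTop, (msum p x m n : ℝ) ≤ n * α + C) : lowerM p x = α := by
  have hb := msum_div_mem hp x
  have hlim : Tendsto (lowerMn p x) atTop (nhds α) := by
    refine tendsto_of_tendsto_of_tendsto_of_le_of_le' (tendsto_add_const_div α (-C))
      (tendsto_add_const_div α C) ?_ ?_ <;>
    filter_upwards [eventually_gt_atTop 0] with n hn <;>
    have hn' : (0 : ℝ) < n := by exact_mod_cast hn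
    · refine le_liminf_of_le
        (isBoundedUnder_of ⟨(p : ℝ), fun m => (hb m n).2⟩).isCoboundedUnder_ge
        (Eventually.of_forall fun m => ?_)
      rw [le_div_iff₀ hn', add_mul, div_mul_cancel₀ _ hn'.ne']
      linarith [h1 m n]
    · refine liminf_le_of_frequently_le ((h2 n).mono fun m hm => ?_)
        (isBoundedUnder_of ⟨(0 : ℝ), fun m => (hb m n).1⟩)
      rw [div_le_iff₀ hn', add_mul, div_mul_cancel₀ _ hn'.ne']
      linarith
  exact hlim.liminf_eq

lemma upperM_eq_of_bounds {p : ℕ} (hp : 0 < p) {x β C : ℝ}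
    (h1 : ∀ m n : ℕ, msum p x m n ≤ n * β + C)
    (h2 : ∀ n : ℕ, ∃ᶠ m in atTop, n * β - C ≤ (msum p x m n : ℝ)) : upperM p x = β := by
  have hb := msum_div_mem hp x
  have hlim : Tendsto (upperMn p x) atTop (nhds β) := by
    refine tendsto_of_tendsto_of_tendsto_of_le_of_le' (tendsto_add_const_div β (-C))
      (tendsto_add_const_div β C) ?_ ?_ <;>
    filter_upwards [eventually_gt_atTop 0] with n hn <;>
    have hn' : (0 : ℝ) < n := by exact_mod_cast hn
    · refine le_limsup_of_frequently_le ((h2 n).mono fun m hm => ?_)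
        (isBoundedUnder_of ⟨(p : ℝ), fun m => (hb m n).2⟩)
      rw [le_div_iff₀ hn', add_mul, div_mul_cancel₀ _ hn'.ne']
      linarith
    · refine limsup_le_of_le
        (isBoundedUnder_of ⟨(0 : ℝ), fun m => (hb m n).1⟩).isCoboundedUnder_le
        (Eventually.of_forall fun m => ?_)
      rw [div_le_iff₀ hn', add_mul, div_mul_cancel₀ _ hn'.ne']
      linarith [h1 m n]
  exact hlim.limsup_eq

lemma le_dimH_image_of_abs_sub_le {G : ℝ → ℝ} {C ρ : NNReal} (hρ : 0 < ρ)
    (h : ∀ y ∈ Ico (0 : ℝ) 1, ∀ y' ∈ Ico (0 : ℝ) 1, |y - y'| ≤ C * |G y - G y'| ^ (ρ : ℝ)) :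
    (ρ : ℝ≥0∞) ≤ dimH (G '' Ico 0 1) := by
  have hinj : InjOn G (Ico 0 1) := by
    intro y hy y' hy' e
    have := h y hy y' hy'
    rw [e, sub_self, abs_zero, Real.zero_rpow (by exact_mod_cast hρ.ne'), mul_zero] at this
    linarith [abs_eq_zero.1 (le_antisymm this (abs_nonneg _))]
  have hinv := hinj.leftInvOn_invFunOn
  have hH : HolderOnWith C ρ (Function.invFunOn G (Ico 0 1)) (G '' Ico 0 1) := by
    rintro _ ⟨y, hy, rfl⟩ _ ⟨y', hy', rfl⟩
    rw [hinv hy, hinv hy', edist_dist, edist_dist, Real.dist_eq, Real.dist_eq,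
      ENNReal.ofReal_rpow_of_nonneg (abs_nonneg _) ρ.coe_nonneg, ← ENNReal.ofReal_coe_nnreal,
      ← ENNReal.ofReal_mul C.coe_nonneg]
    exact ENNReal.ofReal_le_ofReal (h y hy y' hy')
  have h1 := hH.dimH_image_le hρ
  rw [hinv.image_image] at h1
  have h2 : dimH (Ico (0 : ℝ) 1) = 1 := by
    have := Real.dimH_of_nonempty_interior (E := ℝ) (s := Ico (0 : ℝ) 1) (by simp)
    simpa using this
  rw [h2] at h1
  have hρ0 : (ρ : ℝ≥0∞) ≠ 0 := by exact_mod_cast hρ.ne'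
  simpa using (ENNReal.le_div_iff_mul_le (Or.inl hρ0) (Or.inl ENNReal.coe_ne_top)).1 h1

/-- Digits in `{0, …, p-1}`, filled greedily so that their total is `q`. -/
def fillDigit (p q i : ℕ) : ℕ := min (p - 1) (q - i * (p - 1))

lemma fillDigit_lt {p : ℕ} (hp : 0 < p) (q i : ℕ) : fillDigit p q i < p :=
  (min_le_left _ _).trans_lt (by omega)

lemma sum_fillDigit (p q L : ℕ) :
    ∑ i ∈ Finset.range L, fillDigit p q i = min q (L * (p - 1)) := by
  induction L with
  | zero => simp
  | succ L ih =>
    rw [Finset.sum_range_succ, ih, fillDigit, Nat.succ_mul]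
    omega

/-- The cumulative target digit sum when block `j` of length `N` has target mean `τ j`. -/
def cumTarget (τ : ℕ → ℝ) (N i : ℕ) : ℝ := ∑ l ∈ Finset.range i, τ (l / N)

/-- The integer digit sum prescribed for block `j`. -/
def blockSum (τ : ℕ → ℝ) (N j : ℕ) : ℕ :=
  ⌊cumTarget τ N ((j + 1) * N)⌋₊ - ⌊cumTarget τ N (j * N)⌋₊

lemma cumTarget_add (τ : ℕ → ℝ) {N : ℕ} (j : ℕ) {q : ℕ} (hq : q ≤ N) :
    cumTarget τ N (j * N + q) = cumTarget τ N (j * N) + q * τ j := by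
  rw [cumTarget, Finset.sum_range_add, cumTarget]
  congr 1
  rw [Finset.sum_congr rfl (g := fun _ => τ j), Finset.sum_const, Finset.card_range, nsmul_eq_mul]
  intro l hl
  have hl' : l < N := (Finset.mem_range.1 hl).trans_le hq
  congr 1
  rw [mul_comm, Nat.mul_add_div (by omega), Nat.div_eq_of_lt hl', add_zero]

lemma cumTarget_succ (τ : ℕ → ℝ) (N j : ℕ) :
    cumTarget τ N ((j + 1) * N) = cumTarget τ N (j * N) + N * τ j := by
  rw [Nat.succ_mul, cumTarget_add τ j le_rfl]

lemma cumTarget_nonneg {τ : ℕ → ℝ} (hτ : ∀ j, 0 ≤ τ j) (N i : ℕ) : 0 ≤ cumTarget τ N i :=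
  Finset.sum_nonneg fun _ _ => hτ _

lemma floor_add_blockSum {τ : ℕ → ℝ} (hτ : ∀ j, 0 ≤ τ j) (N j : ℕ) :
    ⌊cumTarget τ N (j * N)⌋₊ + blockSum τ N j = ⌊cumTarget τ N ((j + 1) * N)⌋₊ := by
  refine Nat.add_sub_cancel' (Nat.floor_le_floor ?_)
  rw [cumTarget_succ]
  have := mul_nonneg N.cast_nonneg (hτ j)
  linarith

lemma blockSum_bounds {τ : ℕ → ℝ} (hτ : ∀ j, 0 ≤ τ j) (N j : ℕ) :
    N * τ j - 1 < blockSum τ N j ∧ (blockSum τ N j : ℝ) < N * τ j + 1 := by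
  have h := floor_add_blockSum hτ N j
  have h' : (⌊cumTarget τ N (j * N)⌋₊ : ℝ) + blockSum τ N j = ⌊cumTarget τ N ((j + 1) * N)⌋₊ := by
    exact_mod_cast h
  have a1 := Nat.floor_le (cumTarget_nonneg hτ N (j * N))
  have a2 := Nat.lt_floor_add_one (cumTarget τ N (j * N))
  have b1 := Nat.floor_le (cumTarget_nonneg hτ N ((j + 1) * N))
  have b2 := Nat.lt_floor_add_one (cumTarget τ N ((j + 1) * N))
  rw [cumTarget_succ] at b1 b2 h'
  constructor <;> linarith

/-- Data for building digit sequences out of blocks of length `N`. Block `j` has digit sum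
`blockSum τ N j`; if `j` is free, then the first `n` digits of the block are one of the `M`
words `U a`, all of digit sum `s`. All the other digits are determined by `j`. -/
structure BlockScheme (p M : ℕ) where
  /-- block length -/
  N : ℕ
  /-- length of the free words -/
  n : ℕ
  /-- digit sum of the free words -/
  s : ℕ
  /-- target mean of each block -/
  τ : ℕ → ℝ
  /-- the blocks containing a free word -/
  free : ℕ → Prop
  [dec : DecidablePred free]
  /-- the free words -/
  U : Fin M → Fin n → Fin p
  two_le : 2 ≤ p
  n_lt : n < N
  s_pos : 0 < s
  τ_nonneg : ∀ j, 0 ≤ τ j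
  τ_le : ∀ j, τ j ≤ p - 1
  free_infinite : {j | free j}.Infinite
  U_injective : Function.Injective U
  U_sum : ∀ a, ∑ l, (U a l : ℕ) = s
  le_blockSum : ∀ j, free j → s ≤ blockSum τ N j
  blockSum_le : ∀ j, free j → blockSum τ N j - s ≤ (N - n) * (p - 1)

namespace BlockScheme

variable {p M : ℕ} (B : BlockScheme p M)

instance : DecidablePred B.free := B.dec

/-- Digit `l` of block `j` in the sequence coded by `c`. -/
def blockDigit (c : ℕ → Fin M) (j l : ℕ) : ℕ :=
  if B.free j then
    if h : l < B.n then B.U (c (Nat.count B.free j)) ⟨l, h⟩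
    else fillDigit p (blockSum B.τ B.N j - B.s) (l - B.n)
  else fillDigit p (blockSum B.τ B.N j) l

lemma p_pos {p M : ℕ} (B : BlockScheme p M) : 0 < p := by have := B.two_le; omega

lemma N_pos : 0 < B.N := by have := B.n_lt; omega

lemma blockDigit_lt (c : ℕ → Fin M) (j l : ℕ) : B.blockDigit c j l < p := by
  unfold blockDigit
  split_ifs
  · exact Fin.is_lt _
  · exact fillDigit_lt B.p_pos _ _
  · exact fillDigit_lt B.p_pos _ _

lemma sum_blockDigit_free (c : ℕ → Fin M) {j : ℕ} (hj : B.free j) :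
    ∑ l ∈ Finset.range B.n, B.blockDigit c j l = B.s := by
  rw [← Fin.sum_univ_eq_sum_range, ← B.U_sum (c (Nat.count B.free j))]
  refine Finset.sum_congr rfl fun l _ => ?_
  simp [blockDigit, hj]

lemma blockSum_le_mul (j : ℕ) : blockSum B.τ B.N j ≤ B.N * (p - 1) := by
  have h := (blockSum_bounds B.τ_nonneg B.N j).2
  have h2 : (B.N : ℝ) * B.τ j ≤ B.N * (p - 1) := by gcongr; exact B.τ_le j
  have h3 : (blockSum B.τ B.N j : ℝ) < ((B.N * (p - 1) + 1 : ℕ) : ℝ) := by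
    push_cast [Nat.cast_sub (show 1 ≤ p from B.p_pos)]
    linarith
  exact Nat.lt_succ_iff.1 (by exact_mod_cast h3)

lemma sum_blockDigit (c : ℕ → Fin M) (j : ℕ) :
    ∑ l ∈ Finset.range B.N, B.blockDigit c j l = blockSum B.τ B.N j := by
  by_cases hj : B.free j
  · have := B.n_lt
    have e : B.N = B.n + (B.N - B.n) := by omega
    have h1 : ∑ l ∈ Finset.range (B.N - B.n), B.blockDigit c j (B.n + l) =
        ∑ l ∈ Finset.range (B.N - B.n), fillDigit p (blockSum B.τ B.N j - B.s) l := by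
      refine Finset.sum_congr rfl fun l _ => ?_
      simp [blockDigit, hj]
    conv_lhs => rw [e, Finset.sum_range_add, B.sum_blockDigit_free c hj, h1, sum_fillDigit,
      min_eq_left (B.blockSum_le j hj)]
    have := B.le_blockSum j hj
    omega
  · rw [← min_eq_left (B.blockSum_le_mul j), ← sum_fillDigit]
    refine Finset.sum_congr rfl fun l _ => ?_
    simp [blockDigit, hj]

/-- The digit sequence coded by `c`. -/
def digitSeq (c : ℕ → Fin M) (i : ℕ) : Fin p :=
  ⟨B.blockDigit c (i / B.N) (i % B.N), B.blockDigit_lt c _ _⟩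

lemma digitSeq_mul_add (c : ℕ → Fin M) (j : ℕ) {l : ℕ} (hl : l < B.N) :
    (B.digitSeq c (j * B.N + l) : ℕ) = B.blockDigit c j l := by
  simp only [digitSeq]
  rw [mul_comm, Nat.mul_add_div B.N_pos, Nat.div_eq_of_lt hl, Nat.mul_add_mod, Nat.mod_eq_of_lt hl,
    add_zero]

lemma exists_digitSeq_ne_zero (c : ℕ → Fin M) (K : ℕ) :
    ∃ i ≥ K, (B.digitSeq c i : ℕ) ≠ 0 := by
  obtain ⟨j, hj, hKj⟩ := B.free_infinite.exists_gt K
  have hsum := B.sum_blockDigit_free c hj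
  have hs := B.s_pos
  obtain ⟨l, hl, hl0⟩ := Finset.exists_ne_zero_of_sum_ne_zero (by rw [hsum]; omega)
  have hlN : l < B.N := (Finset.mem_range.1 hl).trans B.n_lt
  refine ⟨j * B.N + l, ?_, by rwa [B.digitSeq_mul_add c j hlN]⟩
  have := Nat.le_mul_of_pos_right j B.N_pos
  omega

/-- Partial sums of the digit sequence. -/
def cumDigit (c : ℕ → Fin M) (i : ℕ) : ℕ := ∑ l ∈ Finset.range i, (B.digitSeq c l : ℕ)

lemma cumDigit_mul (c : ℕ → Fin M) (j : ℕ) :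
    B.cumDigit c (j * B.N) = ⌊cumTarget B.τ B.N (j * B.N)⌋₊ := by
  induction j with
  | zero => simp [cumDigit, cumTarget]
  | succ j ih =>
    rw [← floor_add_blockSum B.τ_nonneg, ← ih, Nat.succ_mul, cumDigit, Finset.sum_range_add,
      cumDigit, ← B.sum_blockDigit c j]
    congr 1
    exact Finset.sum_congr rfl fun l hl => B.digitSeq_mul_add c j (Finset.mem_range.1 hl)

lemma abs_cumDigit_sub_le (c : ℕ → Fin M) (i : ℕ) :
    |(B.cumDigit c i : ℝ) - cumTarget B.τ B.N i| ≤ B.N * p + 1 := by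
  obtain ⟨j, q, hq, rfl⟩ : ∃ j q, q < B.N ∧ i = j * B.N + q :=
    ⟨i / B.N, i % B.N, Nat.mod_lt _ B.N_pos, (Nat.div_add_mod' _ _).symm⟩
  have h1 : B.cumDigit c (j * B.N + q) = ⌊cumTarget B.τ B.N (j * B.N)⌋₊ +
      ∑ l ∈ Finset.range q, (B.digitSeq c (j * B.N + l) : ℕ) := by
    rw [← B.cumDigit_mul c, cumDigit, Finset.sum_range_add, cumDigit]
  have h2 : ∑ l ∈ Finset.range q, (B.digitSeq c (j * B.N + l) : ℕ) ≤ B.N * p := by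
    refine (Finset.sum_le_card_nsmul _ _ p fun l _ => (Fin.is_lt _).le).trans ?_
    rw [Finset.card_range, smul_eq_mul]
    gcongr
  have h2' : ((∑ l ∈ Finset.range q, (B.digitSeq c (j * B.N + l) : ℕ) : ℕ) : ℝ) ≤ B.N * p := by
    exact_mod_cast h2
  have h2'' := Nat.cast_nonneg (α := ℝ) (∑ l ∈ Finset.range q, (B.digitSeq c (j * B.N + l) : ℕ))
  rw [h1, cumTarget_add _ _ hq.le, Nat.cast_add]
  have a1 := Nat.floor_le (cumTarget_nonneg B.τ_nonneg B.N (j * B.N))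
  have a2 := Nat.lt_floor_add_one (cumTarget B.τ B.N (j * B.N))
  have h3 : (q : ℝ) * B.τ j ≤ B.N * p := by
    have h0 := B.τ_nonneg j
    have := B.τ_le j
    gcongr
    linarith
  have h4 := mul_nonneg (Nat.cast_nonneg (α := ℝ) q) (B.τ_nonneg j)
  rw [abs_le]
  constructor <;> linarith

lemma msum_eq (c : ℕ → Fin M) (m k : ℕ) :
    (msum p (Real.ofDigits (B.digitSeq c)) m k : ℝ) =
      (B.cumDigit c (m + k) : ℝ) - B.cumDigit c m := by
  have h : B.cumDigit c (m + k) =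
      B.cumDigit c m + ∑ i ∈ Finset.range k, (B.digitSeq c (m + i) : ℕ) := by
    rw [cumDigit, Finset.sum_range_add, cumDigit]
  rw [h, msum]
  simp only [padicDigit_ofDigits (B.exists_digitSeq_ne_zero c)]
  push_cast
  ring

lemma abs_msum_sub_le (c : ℕ → Fin M) (m k : ℕ) :
    |(msum p (Real.ofDigits (B.digitSeq c)) m k : ℝ) -
      ∑ i ∈ Finset.range k, B.τ ((m + i) / B.N)| ≤ 2 * (B.N * p + 1) := by
  have h1 : cumTarget B.τ B.N (m + k) =
      cumTarget B.τ B.N m + ∑ i ∈ Finset.range k, B.τ ((m + i) / B.N) := by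
    rw [cumTarget, Finset.sum_range_add, cumTarget]
  have a := abs_le.1 (B.abs_cumDigit_sub_le c (m + k))
  have b := abs_le.1 (B.abs_cumDigit_sub_le c m)
  rw [h1] at a
  rw [msum_eq, abs_le]
  constructor <;> linarith [a.1, a.2, b.1, b.2]

lemma ofDigits_mem_BanachSet {α β : ℝ} (hmem : ∀ j, B.τ j ∈ Icc α β)
    (hα : ∀ k : ℕ, ∃ᶠ m in atTop, ∀ i < k, B.τ ((m + i) / B.N) = α)
    (hβ : ∀ k : ℕ, ∃ᶠ m in atTop, ∀ i < k, B.τ ((m + i) / B.N) = β) (c : ℕ → Fin M) :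
    Real.ofDigits (B.digitSeq c) ∈ BanachSet p α β := by
  have key := fun m k => abs_le.1 (B.abs_msum_sub_le c m k)
  have hconst : ∀ (t : ℝ) (m k : ℕ), (∀ i < k, B.τ ((m + i) / B.N) = t) →
      ∑ i ∈ Finset.range k, B.τ ((m + i) / B.N) = k * t := by
    intro t m k h
    rw [Finset.sum_congr rfl fun i hi => h i (Finset.mem_range.1 hi), Finset.sum_const,
      Finset.card_range, nsmul_eq_mul]
  refine ⟨⟨Real.ofDigits_nonneg _, Real.ofDigits_le_one _⟩,
    lowerM_eq_of_bounds B.p_pos (C := 2 * (B.N * p + 1)) (fun m k => ?_) fun k =>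
      (hα k).mono fun m hm => ?_,
    upperM_eq_of_bounds B.p_pos (C := 2 * (B.N * p + 1)) (fun m k => ?_) fun k =>
      (hβ k).mono fun m hm => ?_⟩
  · have := Finset.card_nsmul_le_sum (Finset.range k) (fun i => B.τ ((m + i) / B.N)) α
      fun i _ => (hmem _).1
    rw [Finset.card_range, nsmul_eq_mul] at this
    linarith [(key m k).1]
  · linarith [(key m k).2, hconst α m k hm]
  · have := Finset.sum_le_card_nsmul (Finset.range k) (fun i => B.τ ((m + i) / B.N)) β
      fun i _ => (hmem _).2
    rw [Finset.card_range, nsmul_eq_mul] at this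
    linarith [(key m k).2]
  · linarith [(key m k).1, hconst β m k hm]

lemma le_abs_ofDigits_digitSeq_sub {c c' : ℕ → Fin M} {j : ℕ} (hj : B.free j)
    (hc : c (Nat.count B.free j) ≠ c' (Nat.count B.free j)) :
    ((p : ℝ) ^ ((j + 1) * B.N))⁻¹ ≤
      |Real.ofDigits (B.digitSeq c) - Real.ofDigits (B.digitSeq c')| := by
  obtain ⟨l, hl⟩ : ∃ l, B.U (c (Nat.count B.free j)) l ≠ B.U (c' (Nat.count B.free j)) l := by
    by_contra! h
    exact hc (B.U_injective (funext h))
  have hn := B.n_lt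
  have hN := B.N_pos
  have h := le_abs_ofDigits_sub B.two_le (d := B.digitSeq c) (d' := B.digitSeq c')
    (i := j * B.N + l) (q := j * B.N + (B.N - 1)) (by omega)
    (fun h => hl (by
      have h' := congrArg Fin.val h
      rw [B.digitSeq_mul_add c j (by omega), B.digitSeq_mul_add c' j (by omega)] at h'
      simp only [blockDigit, hj, if_true, l.2, dif_pos] at h'
      exact Fin.ext h'))
    (by
      apply Fin.ext
      rw [B.digitSeq_mul_add c j (by omega), B.digitSeq_mul_add c' j (by omega)]
      simp [blockDigit, show ¬ B.N - 1 < B.n by omega])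
  rwa [show j * B.N + (B.N - 1) + 1 = (j + 1) * B.N by rw [Nat.succ_mul]; omega] at h

theorem le_dimH_BanachSet {α β γ C : ℝ} {ρ : NNReal} (hmem : ∀ j, B.τ j ∈ Icc α β)
    (hα : ∀ k : ℕ, ∃ᶠ m in atTop, ∀ i < k, B.τ ((m + i) / B.N) = α)
    (hβ : ∀ k : ℕ, ∃ᶠ m in atTop, ∀ i < k, B.τ ((m + i) / B.N) = β)
    (hM : 2 ≤ M) (hρ : 0 < ρ) (hγ : 0 < γ) (hMγ : (p : ℝ) ^ (B.N * γ) ≤ M)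
    (hcount : ∀ j : ℕ, j * (ρ / γ) - C ≤ (Nat.count B.free j : ℝ)) :
    (ρ : ℝ≥0∞) ≤ dimH (BanachSet p α β) := by
  have : NeZero M := ⟨by omega⟩
  have hp0 : (0 : ℝ) < p := by exact_mod_cast B.p_pos
  have hp1 : (1 : ℝ) ≤ p := by exact_mod_cast B.p_pos
  let G : ℝ → ℝ := fun y => Real.ofDigits (B.digitSeq (Real.digits y M))
  let A : NNReal := Real.toNNReal ((p : ℝ) ^ (B.N * ρ + B.N * γ * C))
  refine (le_dimH_image_of_abs_sub_le (G := G) (C := A) hρ ?_).trans (dimH_mono ?_)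
  · intro y hy y' hy'
    have hA : (A : ℝ) = (p : ℝ) ^ (B.N * ρ + B.N * γ * C) :=
      Real.coe_toNNReal _ (by positivity)
    by_cases hyy : Real.digits y M = Real.digits y' M
    · have : y = y' := by
        rw [← Real.ofDigits_digits (by omega : 1 < M) hy, hyy,
          Real.ofDigits_digits (by omega : 1 < M) hy']
      rw [this, sub_self, abs_zero]
      positivity
    · have hex : ∃ k, Real.digits y M k ≠ Real.digits y' M k := by
        by_contra! h
        exact hyy (funext h)
      set k := Nat.find hex with hk
      have hk1 : Real.digits y M k ≠ Real.digits y' M k := Nat.find_spec hex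
      have hk2 : ∀ i < k, Real.digits y M i = Real.digits y' M i := fun i hi => by
        simpa using Nat.find_min hex hi
      have h1 : |y - y'| ≤ ((M : ℝ) ^ k)⁻¹ := by
        have := Real.abs_ofDigits_sub_ofDigits_le hk2
        rwa [Real.ofDigits_digits (by omega : 1 < M) hy,
          Real.ofDigits_digits (by omega : 1 < M) hy'] at this
      set j := Nat.nth B.free k with hj
      have hjfree : B.free j := Nat.nth_mem_of_infinite B.free_infinite k
      have hjk : Nat.count B.free j = k := Nat.count_nth_of_infinite B.free_infinite k
      have h2 := B.le_abs_ofDigits_digitSeq_sub (c := Real.digits y M) (c' := Real.digits y' M)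
        hjfree (by rwa [hjk])
      have h3 := hcount j
      rw [hjk] at h3
      calc |y - y'| ≤ ((M : ℝ) ^ k)⁻¹ := h1
        _ ≤ (((p : ℝ) ^ (B.N * γ)) ^ k)⁻¹ := by gcongr
        _ = (p : ℝ) ^ (-(B.N * γ * k)) := by
          rw [← Real.rpow_natCast _ k, ← Real.rpow_mul hp0.le, Real.rpow_neg hp0.le]
        _ ≤ (p : ℝ) ^ (-(B.N * γ * (j * (ρ / γ) - C))) := by
          refine Real.rpow_le_rpow_of_exponent_le hp1 (neg_le_neg ?_)
          gcongr
        _ = A * (((p : ℝ) ^ ((j + 1) * B.N))⁻¹) ^ (ρ : ℝ) := by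
          rw [hA, ← Real.rpow_natCast _ ((j + 1) * B.N), ← Real.rpow_neg hp0.le,
            ← Real.rpow_mul hp0.le, ← Real.rpow_add hp0]
          congr 1
          push_cast
          field_simp
          ring
        _ ≤ A * |G y - G y'| ^ (ρ : ℝ) := by gcongr
  · rintro _ ⟨y, _, rfl⟩
    exact B.ofDigits_mem_BanachSet hmem hα hβ _

end BlockScheme

lemma sum_pow_le_one_add {p : ℕ} {g : Fin p → ℕ} (hg : Function.Injective g) {z : ℝ}
    (hz0 : 0 < z) (hz1 : z ≤ 1) : ∑ a, z ^ g a ≤ 1 + p * z := by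
  calc ∑ a, z ^ g a ≤ ∑ a, ((if g a = 0 then 1 else 0) + z) := by
        refine Finset.sum_le_sum fun a _ => ?_
        split_ifs with h
        · rw [h, pow_zero]; linarith
        · rw [zero_add]; exact pow_le_of_le_one hz0.le hz1 h
    _ ≤ 1 + p * z := by
        rw [Finset.sum_add_distrib, Finset.sum_const, Finset.card_univ, Fintype.card_fin,
          nsmul_eq_mul, ← Finset.sum_filter, Finset.sum_const, nsmul_one]
        gcongr
        have : (Finset.univ.filter fun a => g a = 0).card ≤ 1 :=
          Finset.card_le_one.2 fun a ha b hb => hg (by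
            rw [(Finset.mem_filter.1 ha).2, (Finset.mem_filter.1 hb).2])
        exact_mod_cast this

lemma hcount_le_of_sum_lt {p n : ℕ} {g : Fin p → ℕ} (hg : Function.Injective g) {t δ z : ℝ}
    (hz0 : 0 < z) (hz1 : z ≤ 1)
    (h : ∀ w : Fin n → Fin p, (n : ℝ) * (t - δ) < ∑ i, ((w i : ℕ) : ℝ) →
      (∑ i, ((w i : ℕ) : ℝ)) < n * (t + δ) → ∑ i, (g (w i) : ℝ) < n * δ) :
    (hcount p n t δ : ℝ) ≤ (z ^ (n * δ))⁻¹ * (1 + p * z) ^ n := by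
  have hsum : ∑ w : Fin n → Fin p, ∏ i, z ^ g (w i) = (∑ a, z ^ g a) ^ n := by
    have := Finset.prod_univ_sum (fun _ : Fin n => (Finset.univ : Finset (Fin p)))
      fun _ a => z ^ g a
    rw [Finset.prod_const, Finset.card_univ, Fintype.card_fin, Fintype.piFinset_univ] at this
    exact this.symm
  rw [hcount, Nat.card_eq_fintype_card, Fintype.card_subtype]
  calc _ = ∑ w ∈ Finset.univ.filter fun w : Fin n → Fin p =>
        (n : ℝ) * (t - δ) < ∑ i, ((w i : ℕ) : ℝ) ∧ (∑ i, ((w i : ℕ) : ℝ)) < n * (t + δ),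
          (1 : ℝ) := by simp
    _ ≤ ∑ w ∈ Finset.univ.filter fun w : Fin n → Fin p =>
        (n : ℝ) * (t - δ) < ∑ i, ((w i : ℕ) : ℝ) ∧ (∑ i, ((w i : ℕ) : ℝ)) < n * (t + δ),
          (z ^ (n * δ))⁻¹ * ∏ i, z ^ g (w i) := by
        refine Finset.sum_le_sum fun w hw => ?_
        obtain ⟨h1, h2⟩ := (Finset.mem_filter.1 hw).2
        rw [Finset.prod_pow_eq_pow_sum, ← Real.rpow_natCast, ← div_eq_inv_mul,
          one_le_div (by positivity)]
        refine Real.rpow_le_rpow_of_exponent_ge hz0 hz1 ?_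
        push_cast
        exact (h w h1 h2).le
    _ ≤ ∑ w : Fin n → Fin p, (z ^ (n * δ))⁻¹ * ∏ i, z ^ g (w i) :=
        Finset.sum_le_sum_of_subset_of_nonneg (Finset.subset_univ _) fun _ _ _ => by positivity
    _ = (z ^ (n * δ))⁻¹ * (∑ a, z ^ g a) ^ n := by rw [← Finset.mul_sum, hsum]
    _ ≤ _ := by
        have := sum_pow_le_one_add hg hz0 hz1
        gcongr

lemma entropy_nonpos_of_sum_lt {p : ℕ} (hp : 2 ≤ p) {g : Fin p → ℕ} (hg : Function.Injective g)
    {t : ℝ} (h : ∀ (n : ℕ) (δ : ℝ) (w : Fin n → Fin p),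
      (n : ℝ) * (t - δ) < ∑ i, ((w i : ℕ) : ℝ) →
      (∑ i, ((w i : ℕ) : ℝ)) < n * (t + δ) → ∑ i, (g (w i) : ℝ) < n * δ) :
    entropy p t ≤ 0 := by
  have hlog := log_natCast_pos hp
  have hp0 : (0 : ℝ) < p := by positivity
  have key : ∀ z : ℝ, 0 < z → z ≤ 1 → ∀ δ > 0,
      entropy p t ≤ (-(δ * Real.log z) + p * z) / Real.log p := by
    intro z hz0 hz1 δ hδ
    refine (entropy_le_limsup_hrate p t hδ).trans (limsup_le_of_le
      (hrate_isBoundedUnder_ge p t δ).isCoboundedUnder_le ?_)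
    filter_upwards [eventually_gt_atTop 0] with n hn
    have hn' : (0 : ℝ) < n := by exact_mod_cast hn
    have hz : Real.log z ≤ 0 := Real.log_nonpos hz0.le hz1
    rw [hrate, div_le_div_iff₀ (by positivity) hlog]
    have hmain : Real.log (hcount p n t δ) ≤ n * (-(δ * Real.log z) + p * z) := by
      rcases Nat.eq_zero_or_pos (hcount p n t δ) with h0 | h0
      · rw [h0, Nat.cast_zero, Real.log_zero]
        have : 0 ≤ -(δ * Real.log z) := by nlinarith
        positivity
      · refine (Real.log_le_log (by exact_mod_cast h0)
          (hcount_le_of_sum_lt hg hz0 hz1 (h n δ))).trans ?_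
        rw [Real.log_mul (by positivity) (by positivity), Real.log_inv, Real.log_rpow hz0,
          Real.log_pow]
        have := Real.log_le_sub_one_of_pos (show 0 < 1 + p * z by positivity)
        have h2 : (n : ℝ) * Real.log (1 + p * z) ≤ n * (p * z) := by gcongr; linarith
        linarith
    calc _ ≤ n * (-(δ * Real.log z) + p * z) * Real.log p := by gcongr
      _ = _ := by ring
  refine le_of_forall_pos_le_add fun ε hε => ?_
  rw [zero_add]
  set z : ℝ := min 1 (ε * Real.log p / (2 * p)) with hz
  have hz0 : 0 < z := lt_min one_pos (by positivity)
  have hz1 : z ≤ 1 := min_le_left _ _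
  have hz2 : p * z ≤ ε * Real.log p / 2 := by
    calc p * z ≤ p * (ε * Real.log p / (2 * p)) := by gcongr; exact min_le_right _ _
      _ = _ := by field_simp
  have hlz : 0 < 1 - Real.log z := by linarith [Real.log_nonpos hz0.le hz1]
  refine (key z hz0 hz1 (ε * Real.log p / (2 * (1 - Real.log z))) (by positivity)).trans ?_
  rw [div_le_iff₀ hlog]
  have : -(ε * Real.log p / (2 * (1 - Real.log z)) * Real.log z) ≤ ε * Real.log p / 2 := by
    rw [← mul_neg, div_mul_eq_mul_div, div_le_div_iff₀ (by positivity) two_pos]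
    have : 0 < ε * Real.log p := by positivity
    nlinarith
  linarith

lemma entropy_zero_nonpos {p : ℕ} (hp : 2 ≤ p) : entropy p 0 ≤ 0 :=
  entropy_nonpos_of_sum_lt hp (g := fun a => (a : ℕ)) Fin.val_injective fun n δ w _ h => by
    simpa using h

lemma entropy_sub_one_nonpos {p : ℕ} (hp : 2 ≤ p) : entropy p (p - 1) ≤ 0 := by
  refine entropy_nonpos_of_sum_lt hp (g := fun a => p - 1 - a) (fun a b hab => ?_)
    fun n δ w h _ => ?_
  · apply Fin.ext
    have := a.2
    have := b.2
    simp only at hab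
    omega
  · have e : ∀ a : Fin p, ((p - 1 - (a : ℕ) : ℕ) : ℝ) = (p - 1) - (a : ℕ) := fun a => by
      have := a.2
      rw [Nat.cast_sub (by omega), Nat.cast_sub (by omega), Nat.cast_one]
    simp only [e, Finset.sum_sub_distrib, Finset.sum_const, Finset.card_univ, Fintype.card_fin,
      nsmul_eq_mul]
    linarith

lemma exists_free_words {p : ℕ} (hp : 2 ≤ p) {t γ : ℝ} (ht0 : 0 < t) (htp : t < p - 1)
    (hγ : 0 < γ) (hγt : γ < entropy p t) :
    ∃ (n r s M : ℕ) (U : Fin M → Fin n → Fin p), 0 < r ∧ 0 < s ∧ 2 ≤ M ∧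
      Function.Injective U ∧ (∀ a, ∑ l, (U a l : ℕ) = s) ∧
      (p : ℝ) ^ (((n + r : ℕ) : ℝ) * γ) ≤ M ∧
      ∀ q : ℕ, ((n + r : ℕ) : ℝ) * t - 1 < q → (q : ℝ) < ((n + r : ℕ) : ℝ) * t + 1 →
        s ≤ q ∧ q - s ≤ r * (p - 1) := by
  have hp0 : (0 : ℝ) < p := by positivity
  have hp1 : (1 : ℝ) < p := by exact_mod_cast hp
  have hlog := log_natCast_pos hp
  obtain ⟨γ', hγγ', hγ't⟩ := exists_between hγt
  set κ := min t (p - 1 - t) with hκ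
  have hκ0 : 0 < κ := lt_min ht0 (by linarith)
  set η := (γ' - γ) / (2 * γ) with hη
  have hη0 : 0 < η := div_pos (by linarith) (by positivity)
  have hηγ : η * γ = (γ' - γ) / 2 := by rw [hη]; field_simp
  set δ := min (η * κ / 2) t with hδ
  have hδ0 : 0 < δ := lt_min (by positivity) ht0
  have hfreq : ∃ᶠ n in atTop, γ' < hrate p t δ n :=
    frequently_lt_of_lt_limsup (hrate_isBoundedUnder_ge p t δ).isCoboundedUnder_le
      (hγ't.trans_le (entropy_le_limsup_hrate p t hδ0))
  have hev1 : ∀ᶠ n : ℕ in atTop, 1 ≤ (n : ℝ) * (η * κ / 2) :=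
    (tendsto_natCast_atTop_atTop.atTop_mul_const (by positivity)).eventually_ge_atTop 1
  have hev2 : ∀ᶠ n : ℕ in atTop,
      (n : ℝ) ^ 1 / ((p : ℝ) ^ ((γ' - γ) / 2)) ^ n < 1 / (p * (p : ℝ) ^ γ) :=
    (tendsto_pow_const_div_const_pow_of_one_lt 1
      (Real.one_lt_rpow hp1 (by linarith))).eventually_lt_const (by positivity)
  obtain ⟨n, hn, hn1, hn2, hn0⟩ := (hfreq.and_eventually
    (hev1.and (hev2.and (eventually_gt_atTop 0)))).exists
  have hn0' : (0 : ℝ) < n := by exact_mod_cast hn0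
  set r := ⌈η * n⌉₊ with hr
  have hr1 : η * n ≤ r := Nat.le_ceil _
  have hr2 : (r : ℝ) < η * n + 1 := Nat.ceil_lt_add_one (by positivity)
  have hr0 : 0 < r := Nat.ceil_pos.2 (by positivity)
  classical
  let A : Finset (Fin n → Fin p) := Finset.univ.filter fun w =>
    (n : ℝ) * (t - δ) < ∑ i, ((w i : ℕ) : ℝ) ∧ (∑ i, ((w i : ℕ) : ℝ)) < n * (t + δ)
  have hA : (p : ℝ) ^ (n * γ') ≤ A.card := by
    have hAc : hcount p n t δ = A.card := by
      rw [hcount, Nat.card_eq_fintype_card, Fintype.card_subtype]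
    rw [← hAc]
    have hpos : 0 < hcount p n t δ := by
      rcases Nat.eq_zero_or_pos (hcount p n t δ) with h0 | h0
      · rw [hrate, h0, Nat.cast_zero, Real.log_zero, zero_div] at hn
        linarith
      · exact h0
    rw [Real.rpow_le_iff_le_log hp0 (by exact_mod_cast hpos)]
    rw [hrate, lt_div_iff₀ (by positivity)] at hn
    linarith
  have hmaps : ∀ w ∈ A, ∑ i, (w i : ℕ) ∈ Finset.range (n * p) := by
    intro w _
    rw [Finset.mem_range]
    have : ∑ i, (w i : ℕ) < ∑ _i : Fin n, p :=
      Finset.sum_lt_sum_of_nonempty ⟨⟨0, hn0⟩, Finset.mem_univ _⟩ fun i _ => (w i).2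
    simpa using this
  obtain ⟨s, -, hs⟩ := Finset.exists_le_card_fiber_of_nsmul_le_card_of_maps_to
    (b := (p : ℝ) ^ (n * γ') / (n * p)) hmaps
    ⟨0, Finset.mem_range.2 (by positivity)⟩ (by
      rw [Finset.card_range, nsmul_eq_mul]
      push_cast
      rwa [mul_div_cancel₀ _ (by positivity)])
  set F := A.filter fun w => ∑ i, (w i : ℕ) = s with hF
  have hFcard : (p : ℝ) ^ (((n + r : ℕ) : ℝ) * γ) ≤ F.card := by
    refine le_trans ?_ hs
    rw [le_div_iff₀ (by positivity)]
    rw [pow_one, div_lt_div_iff₀ (by positivity) (by positivity), one_mul] at hn2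
    have e1 : (p : ℝ) ^ (((n + r : ℕ) : ℝ) * γ) ≤
        (p : ℝ) ^ (n * γ + n * ((γ' - γ) / 2) + γ) := by
      refine Real.rpow_le_rpow_of_exponent_le hp1.le ?_
      push_cast
      have : (r : ℝ) * γ ≤ (η * n + 1) * γ := by gcongr
      have e : (η * n + 1) * γ = n * ((γ' - γ) / 2) + γ := by rw [← hηγ]; ring
      linarith
    calc _ ≤ (p : ℝ) ^ (n * γ + n * ((γ' - γ) / 2) + γ) * (n * p) := by gcongr
      _ = (p : ℝ) ^ (n * γ + n * ((γ' - γ) / 2)) * (n * (p * (p : ℝ) ^ γ)) := by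
        rw [Real.rpow_add hp0 _ γ]; ring
      _ ≤ (p : ℝ) ^ (n * γ + n * ((γ' - γ) / 2)) * ((p : ℝ) ^ ((γ' - γ) / 2)) ^ n := by gcongr
      _ = (p : ℝ) ^ (n * γ') := by
        rw [← Real.rpow_natCast _ n, ← Real.rpow_mul hp0.le, ← Real.rpow_add hp0]
        congr 1; ring
  have hF1 : (1 : ℝ) < F.card :=
    (Real.one_lt_rpow hp1 (by push_cast; positivity)).trans_le hFcard
  have hF2 : 1 < F.card := by exact_mod_cast hF1
  obtain ⟨w, hw⟩ := Finset.card_pos.1 (by omega : 0 < F.card)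
  obtain ⟨hwA, hws⟩ := Finset.mem_filter.1 hw
  obtain ⟨hw1, hw2⟩ := (Finset.mem_filter.1 hwA).2
  have hws' : ∑ i, ((w i : ℕ) : ℝ) = s := by exact_mod_cast hws
  rw [hws'] at hw1 hw2
  have hδt : δ ≤ t := min_le_right _ _
  have hnδ : (n : ℝ) * δ + 1 ≤ r * κ := by
    have h1 : (n : ℝ) * δ ≤ n * (η * κ / 2) := by gcongr; exact min_le_left _ _
    have h2 : η * n * κ ≤ r * κ := by gcongr
    linarith
  refine ⟨n, r, s, F.card, fun a => (F.equivFin.symm a).1, hr0, ?_, hF2, ?_, ?_, hFcard, ?_⟩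
  · have : (0 : ℝ) < s := lt_of_le_of_lt (mul_nonneg hn0'.le (by linarith)) hw1
    exact_mod_cast this
  · exact Subtype.val_injective.comp F.equivFin.symm.injective
  · intro a
    exact (Finset.mem_filter.1 (F.equivFin.symm a).2).2
  · intro q hq1 hq2
    push_cast at hq1 hq2
    have hr3 : (r : ℝ) * κ ≤ r * t := by gcongr; exact min_le_left _ _
    have hr4 : (r : ℝ) * κ ≤ r * (p - 1 - t) := by gcongr; exact min_le_right _ _
    have hsq : s ≤ q := by
      have : (s : ℝ) ≤ q := by linarith
      exact_mod_cast this
    refine ⟨hsq, ?_⟩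
    have h3 : ((q - s : ℕ) : ℝ) ≤ ((r * (p - 1) : ℕ) : ℝ) := by
      push_cast [Nat.cast_sub hsq, Nat.cast_sub (show 1 ≤ p by omega)]
      linarith
    exact_mod_cast h3

/-- Positions outside the sparse runs `[2 ^ k, 2 ^ k + k)`. -/
def OffRun (i : ℕ) : Prop := ¬ i - 2 ^ Nat.log 2 i < Nat.log 2 i

instance : DecidablePred OffRun := fun _ => inferInstanceAs (Decidable (¬ _))

lemma log_two_pow_add {k q : ℕ} (hq : q ≤ k) : Nat.log 2 (2 ^ k + q) = k := by
  have hk : k < 2 ^ k := Nat.lt_two_pow_self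
  rw [Nat.log_eq_iff (Or.inr ⟨by norm_num, by positivity⟩), pow_succ]
  omega

lemma offRun_two_pow_add (k : ℕ) : OffRun (2 ^ k + k) := by
  rw [OffRun, log_two_pow_add le_rfl]
  omega

lemma not_offRun_two_pow_add {k q : ℕ} (hq : q < k) : ¬ OffRun (2 ^ k + q) := by
  rw [OffRun, log_two_pow_add hq.le]
  omega

lemma offRun_infinite : {j | OffRun j}.Infinite := by
  refine Set.infinite_of_forall_exists_gt fun a => ⟨2 ^ a + a, offRun_two_pow_add a, ?_⟩
  have : 0 < 2 ^ a := by positivity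
  omega

lemma count_not_offRun_le (j : ℕ) : Nat.count (fun i => ¬ OffRun i) j ≤ (Nat.log 2 j + 1) ^ 2 := by
  rw [Nat.count_eq_card_filter_range]
  have hsub : (Finset.range j).filter (fun i => ¬ OffRun i) ⊆
      (Finset.range (Nat.log 2 j + 1)).biUnion fun k => Finset.Ico (2 ^ k) (2 ^ k + k) := by
    intro i hi
    obtain ⟨hij, hi⟩ := Finset.mem_filter.1 hi
    rw [OffRun, not_not] at hi
    have h0 : i ≠ 0 := by rintro rfl; simp at hi
    have h1 := Nat.pow_log_le_self 2 h0
    have h2 := Nat.log_mono_right (b := 2) (Finset.mem_range.1 hij).le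
    refine Finset.mem_biUnion.2 ⟨Nat.log 2 i, Finset.mem_range.2 (by omega), ?_⟩
    rw [Finset.mem_Ico]
    omega
  refine (Finset.card_le_card hsub).trans (Finset.card_biUnion_le.trans ?_)
  refine (Finset.sum_le_card_nsmul _ _ (Nat.log 2 j + 1) fun k hk => ?_).trans ?_
  · rw [Nat.card_Ico]
    have := Finset.mem_range.1 hk
    omega
  · rw [Finset.card_range, smul_eq_mul, sq]

lemma exists_le_count_offRun {θ : ℝ} (hθ : θ < 1) :
    ∃ C : ℝ, ∀ j : ℕ, j * θ - C ≤ (Nat.count OffRun j : ℝ) := by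
  have hlim : Tendsto (fun k : ℕ => ((k + 1 : ℕ) : ℝ) ^ 2 / 2 ^ (k + 1)) atTop (nhds 0) :=
    (tendsto_pow_const_div_const_pow_of_one_lt 2 (one_lt_two : (1 : ℝ) < 2)).comp
      (tendsto_add_atTop_nat 1)
  obtain ⟨K, hK⟩ := eventually_atTop.1
    (hlim.eventually_lt_const (show 0 < (1 - θ) / 2 by linarith))
  refine ⟨((K : ℝ) + 1) ^ 2, fun j => ?_⟩
  have hsplit : (Nat.count OffRun j : ℝ) + Nat.count (fun i => ¬ OffRun i) j = j := by
    rw [Nat.count_eq_card_filter_range, Nat.count_eq_card_filter_range]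
    exact_mod_cast (Finset.card_filter_add_card_filter_not _).trans (Finset.card_range j)
  have h1 : (Nat.count (fun i => ¬ OffRun i) j : ℝ) ≤ ((Nat.log 2 j : ℝ) + 1) ^ 2 := by
    exact_mod_cast count_not_offRun_le j
  have hj0 : (0 : ℝ) ≤ j * (1 - θ) := mul_nonneg j.cast_nonneg (by linarith)
  have h2 : ((Nat.log 2 j : ℝ) + 1) ^ 2 ≤ j * (1 - θ) + ((K : ℝ) + 1) ^ 2 := by
    rcases le_total (Nat.log 2 j) K with h | h
    · have h' : (Nat.log 2 j : ℝ) ≤ K := by exact_mod_cast h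
      have : ((Nat.log 2 j : ℝ) + 1) ^ 2 ≤ ((K : ℝ) + 1) ^ 2 := by gcongr
      linarith
    · rcases eq_or_ne j 0 with rfl | hj
      · simp only [Nat.log_zero_right, Nat.cast_zero] at *
        nlinarith [K.cast_nonneg (α := ℝ)]
      · have h3 := hK _ h
        rw [div_lt_iff₀ (by positivity)] at h3
        push_cast at h3
        have h4 : (2 : ℝ) ^ Nat.log 2 j ≤ j := by exact_mod_cast Nat.pow_log_le_self 2 hj
        have h5 : (1 - θ) / 2 * 2 ^ (Nat.log 2 j + 1) ≤ j * (1 - θ) := by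
          rw [pow_succ]
          nlinarith
        nlinarith [K.cast_nonneg (α := ℝ)]
  linarith

/-- Target means: `t` off the runs, alternately `α` and `β` on them. -/
def runTarget (α β t : ℝ) (i : ℕ) : ℝ :=
  if OffRun i then t else if Even (Nat.log 2 i) then α else β

lemma runTarget_mem {α β t : ℝ} (ht : t ∈ Icc α β) (i : ℕ) : runTarget α β t i ∈ Icc α β := by
  have hαβ : α ≤ β := ht.1.trans ht.2
  unfold runTarget
  split_ifs
  exacts [ht, ⟨le_rfl, hαβ⟩, ⟨hαβ, le_rfl⟩]

lemma frequently_of_forall_run {P : ℕ → Prop} {N : ℕ} (hN : 0 < N) (k b : ℕ)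
    (hP : ∀ a q : ℕ, q < 2 * a + b → P (2 ^ (2 * a + b) + q)) :
    ∃ᶠ m in atTop, ∀ i < k, P ((m + i) / N) := by
  refine frequently_atTop.2 fun a => ⟨2 ^ (2 * (a + k) + b) * N, ?_, fun i hi => ?_⟩
  · have h1 : 2 * (a + k) + b < 2 ^ (2 * (a + k) + b) := Nat.lt_two_pow_self
    have h2 := Nat.le_mul_of_pos_right (2 ^ (2 * (a + k) + b)) hN
    omega
  · rw [mul_comm, Nat.mul_add_div hN]
    refine hP (a + k) _ ((Nat.div_le_self i N).trans_lt ?_)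
    omega

theorem entropy_le_dimH_BanachSet {p : ℕ} (hp : 2 ≤ p) {α β t : ℝ} (hα : 0 ≤ α)
    (hβ : β ≤ (p : ℝ) - 1) (ht : t ∈ Icc α β) :
    ENNReal.ofReal (entropy p t) ≤ dimH (BanachSet p α β) := by
  refine ENNReal.le_of_forall_nnreal_lt fun ρ hρ => ?_
  rcases eq_zero_or_pos ρ with rfl | hρ0
  · simp
  have hρt : (ρ : ℝ) < entropy p t := by
    rw [← ENNReal.ofReal_coe_nnreal] at hρ
    exact (ENNReal.ofReal_lt_ofReal_iff_of_nonneg ρ.coe_nonneg).1 hρ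
  have hρ0' : (0 : ℝ) < ρ := by exact_mod_cast hρ0
  have ht0 : 0 < t := (hα.trans ht.1).lt_of_ne' fun h => by
    have := entropy_zero_nonpos hp
    rw [h] at hρt
    linarith
  have htp : t < p - 1 := (ht.2.trans hβ).lt_of_ne fun h => by
    have := entropy_sub_one_nonpos hp
    rw [h] at hρt
    linarith
  obtain ⟨γ, hργ, hγt⟩ := exists_between hρt
  have hγ0 : 0 < γ := hρ0'.trans hργ
  obtain ⟨n, r, s, M, U, hr, hs, hM, hUinj, hUsum, hMγ, hq⟩ :=
    exists_free_words hp ht0 htp hγ0 hγt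
  obtain ⟨C, hC⟩ := exists_le_count_offRun ((div_lt_one hγ0).2 hργ)
  have hmem := fun j => runTarget_mem ht j
  have hτ0 : ∀ j, 0 ≤ runTarget α β t j := fun j => hα.trans (hmem j).1
  have hfree : ∀ j, OffRun j → s ≤ blockSum (runTarget α β t) (n + r) j ∧
      blockSum (runTarget α β t) (n + r) j - s ≤ r * (p - 1) := by
    intro j hj
    obtain ⟨h1, h2⟩ := blockSum_bounds hτ0 (n + r) j
    have e : runTarget α β t j = t := if_pos hj
    rw [e] at h1 h2
    exact hq _ h1 h2
  let B : BlockScheme p M :=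
    { N := n + r
      n := n
      s := s
      τ := runTarget α β t
      free := OffRun
      U := U
      two_le := hp
      n_lt := by omega
      s_pos := hs
      τ_nonneg := hτ0
      τ_le := fun j => (hmem j).2.trans hβ
      free_infinite := offRun_infinite
      U_injective := hUinj
      U_sum := hUsum
      le_blockSum := fun j hj => (hfree j hj).1
      blockSum_le := fun j hj => by
        rw [Nat.add_sub_cancel_left]
        exact (hfree j hj).2 }
  refine B.le_dimH_BanachSet (γ := γ) (C := C) hmem (fun k => ?_) (fun k => ?_) hM hρ0 hγ0 hMγ hC
  · refine frequently_of_forall_run (P := fun i => runTarget α β t i = α) B.N_pos k 0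
      fun a q hq => ?_
    rw [runTarget, if_neg (not_offRun_two_pow_add hq), log_two_pow_add hq.le, if_pos (by simp)]
  · refine frequently_of_forall_run (P := fun i => runTarget α β t i = β) B.N_pos k 1
      fun a q hq => ?_
    rw [runTarget, if_neg (not_offRun_two_pow_add hq), log_two_pow_add hq.le,
      if_neg (by simp)]

/-- For an integer `p ≥ 2` and reals `0 ≤ α ≤ β ≤ p-1`, the Hausdorff
dimension of the Banach set `B(α,β)` equals `sup_{α ≤ t ≤ β} h(t)`. -/
theorem dimH_BanachSet (p : ℕ) (hp : 2 ≤ p) (α β : ℝ)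
    (hα : 0 ≤ α) (hαβ : α ≤ β) (hβ : β ≤ (p : ℝ) - 1) :
    dimH (BanachSet p α β) = ENNReal.ofReal (⨆ t ∈ Icc α β, entropy p t) := by
  refine (dimH_BanachSet_le hp hαβ).antisymm ?_
  have htop := Real.dimH_ne_top (BanachSet p α β)
  rw [ENNReal.ofReal_le_iff_le_toReal htop]
  exact Real.iSup_le (fun t => Real.iSup_le (fun ht =>
    (ENNReal.ofReal_le_iff_le_toReal htop).1 (entropy_le_dimH_BanachSet hp hα hβ ht))
    ENNReal.toReal_nonneg) ENNReal.toReal_nonneg
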